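/- arXiv:2507.00183 — 2 statements merged into one kernel-verified Lean document; each statement's English description precedes it below -/
import Mathlib

section
/- For every Λ > 0 there is a constant C > 0, depending only on φ, β and Λ, such that for every λ ∈ [0,Λ], every q ∈ ℝ², and every Schwartz function u : ℝ² → ℂ satisfying Pu = 0, the function w(x) := e^{iσ(x,∇φ(q))} β(x) u(x+q) satisfies ‖Aw‖_{L²(ℝ²)} ≤ C ‖u‖_{L²(ℝ²)} and ‖Bw‖_{L²(ℝ²)} ≤ C ‖u‖_{L²(ℝ²)}. -/
noncomputable section

open MeasureTheory Complex

abbrev R2 : Type := EuclideanSpace ℝ (Fin 2)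

/-- Partial derivative of a complex-valued function in coordinate direction `j`. -/
def pdC (j : Fin 2) (f : R2 → ℂ) (x : R2) : ℂ :=
  fderiv ℝ f x (EuclideanSpace.single j 1)

/-- The operator `D_j = -i ∂_j` acting on complex-valued functions. -/
def Dop (j : Fin 2) (f : R2 → ℂ) (x : R2) : ℂ := -Complex.I * pdC j f x

/-- Partial derivative of a real-valued function in coordinate direction `j`. -/
def pdR (j : Fin 2) (f : R2 → ℝ) (x : R2) : ℝ :=
  fderiv ℝ f x (EuclideanSpace.single j 1)

/-- The Laplacian of a real-valued function. -/
def lapR (f : R2 → ℝ) (x : R2) : ℝ := pdR 0 (pdR 0 f) x + pdR 1 (pdR 1 f) x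

/-- `A u = (D₁/2 - (∂₂ φ)/2) u`. -/
def opA (φ : R2 → ℝ) (u : R2 → ℂ) (x : R2) : ℂ :=
  Dop 0 u x / 2 - ((pdR 1 φ x / 2 : ℝ) : ℂ) * u x

/-- `B u = (D₂/2 + (∂₁ φ)/2) u`. -/
def opB (φ : R2 → ℝ) (u : R2 → ℂ) (x : R2) : ℂ :=
  Dop 1 u x / 2 + ((pdR 0 φ x / 2 : ℝ) : ℂ) * u x

/-- `P u = A²u + B²u - (Δφ/4) u - λ² u`. -/
def opP (φ : R2 → ℝ) (l : ℝ) (u : R2 → ℂ) (x : R2) : ℂ :=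
  opA φ (opA φ u) x + opB φ (opB φ u) x - ((lapR φ x / 4 : ℝ) : ℂ) * u x
    - ((l : ℂ)) ^ 2 * u x

/-- The symplectic phase `σ(x, ∇φ(q)) = x₂ ∂₁φ(q) - x₁ ∂₂φ(q)`. -/
def sigmaPhase (φ : R2 → ℝ) (q x : R2) : ℝ := x 1 * pdR 0 φ q - x 0 * pdR 1 φ q

/-- The conjugated-and-translated localization `w(x) = e^{iσ(x,∇φ(q))} β(x) u(x+q)`. -/
def wFun (φ β : R2 → ℝ) (q : R2) (u : R2 → ℂ) (x : R2) : ℂ :=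
  Complex.exp (Complex.I * ((sigmaPhase φ q x : ℝ) : ℂ)) * ((β x : ℝ) : ℂ) * u (x + q)

/-!
The operators `A` and `B` are magnetic momenta `½ (-i ∂_v) + a`, hence symmetric on `L²`. Pairing
`P u = 0` with `u` gives `‖A u‖² + ‖B u‖² = ∫ (Δφ/4 + λ²) |u|²`, which is at most a constant times
`‖u‖²` because the Hessian of `φ` is bounded.

Translating by `q` and multiplying by `e^{iσ(x,∇φ(q))} β` turns `A u` into `β(x) (A u)(x + q)` plus
multiples of `u(x + q)` with coefficients `β(x) (a(x) - a(x + q) + a(q))` and `-½ i ∂_v β(x)`, all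
up to a phase. The potential `a` is up to sign half a partial derivative of `φ`, so it is Lipschitz
and, `β` having compact support, these coefficients are bounded uniformly in `q`.
-/

open scoped NNReal ENNReal SchwartzMap LineDeriv

section Lp

variable {X F G : Type*} [MeasurableSpace X] [NormedAddCommGroup F] [NormedAddCommGroup G]
  {μ : Measure X}

lemma integrable_inner_of_memLp_two [InnerProductSpace ℝ F] {f g : X → F} (hf : MemLp f 2 μ)
    (hg : MemLp g 2 μ) : Integrable (fun x => inner ℝ (f x) (g x)) μ :=
  memLp_one_iff_integrable.1 ((innerSL ℝ).memLp_of_bilin 1 hf hg)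

lemma eLpNorm_two_eq_ofReal_sqrt_integral {f : X → F} (hf : MemLp f 2 μ) :
    eLpNorm f 2 μ = ENNReal.ofReal √(∫ x, ‖f x‖ ^ 2 ∂μ) := by
  rw [hf.eLpNorm_eq_integral_rpow_norm two_ne_zero ENNReal.ofNat_ne_top, Real.sqrt_eq_rpow]
  simp

lemma eLpNorm_two_le_of_integral_sq_le {f : X → F} {g : X → G} (hf : MemLp f 2 μ)
    (hg : MemLp g 2 μ) {M : ℝ} (h : ∫ x, ‖f x‖ ^ 2 ∂μ ≤ M * ∫ x, ‖g x‖ ^ 2 ∂μ) :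
    eLpNorm f 2 μ ≤ ENNReal.ofReal √M * eLpNorm g 2 μ := by
  rw [eLpNorm_two_eq_ofReal_sqrt_integral hf, eLpNorm_two_eq_ofReal_sqrt_integral hg,
    ← ENNReal.ofReal_mul (Real.sqrt_nonneg M),
    ← Real.sqrt_mul' M (integral_nonneg fun x => sq_nonneg ‖g x‖)]
  gcongr

lemma eLpNorm_le_of_norm_le_translate [AddGroup X] [MeasurableAdd X] [μ.IsAddRightInvariant]
    {H : Type*} [NormedAddCommGroup H] {w : X → H} {f : X → F} {g : X → G} {p : ℝ≥0∞}
    (hp : 1 ≤ p) (hf : AEStronglyMeasurable f μ) (hg : AEStronglyMeasurable g μ) {C : ℝ} (q : X)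
    (h : ∀ x, ‖w x‖ ≤ C * (‖f (x + q)‖ + ‖g (x + q)‖)) :
    eLpNorm w p μ ≤ ENNReal.ofReal C * (eLpNorm f p μ + eLpNorm g p μ) := by
  have hq : MeasurePreserving (fun x => x + q) μ μ := measurePreserving_add_right μ q
  calc eLpNorm w p μ
      ≤ ENNReal.ofReal C * eLpNorm ((fun x => ‖f x‖ + ‖g x‖) ∘ fun x => x + q) p μ :=
        eLpNorm_le_mul_eLpNorm_of_ae_le_mul (ae_of_all μ fun x =>
          (h x).trans_eq (by simp [abs_of_nonneg, add_nonneg])) p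
    _ = ENNReal.ofReal C * eLpNorm (fun x => ‖f x‖ + ‖g x‖) p μ := by
        congr 1
        exact eLpNorm_comp_measurePreserving (hf.norm.add hg.norm) hq
    _ ≤ ENNReal.ofReal C * (eLpNorm f p μ + eLpNorm g p μ) := by
        gcongr
        rw [← eLpNorm_norm f, ← eLpNorm_norm g]
        exact eLpNorm_add_le hf.norm hg.norm hp

end Lp

lemma norm_le_mul_one_add_norm_of_lipschitzWith {E F : Type*} [SeminormedAddCommGroup E]
    [SeminormedAddCommGroup F] {K : ℝ≥0} {a : E → F} (ha : LipschitzWith K a) (x : E) :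
    ‖a x‖ ≤ (‖a 0‖ + K) * (1 + ‖x‖) := by
  have h : ‖a x - a 0‖ ≤ K * ‖x‖ := by simpa using ha.norm_sub_le x 0
  calc ‖a x‖ ≤ ‖a 0‖ + ‖a x - a 0‖ := norm_le_norm_add_norm_sub' _ _
    _ ≤ (‖a 0‖ + K) * 1 + (‖a 0‖ + K) * ‖x‖ := by
        have := mul_nonneg (norm_nonneg (a 0)) (norm_nonneg x)
        linarith [K.coe_nonneg]
    _ = (‖a 0‖ + K) * (1 + ‖x‖) := by ring

section PolynomialGrowth

variable {E F : Type*} [NormedAddCommGroup E] [NormedSpace ℝ E] [NormedAddCommGroup F]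
  [NormedSpace ℝ F]

lemma memLp_smul_schwartzMap [MeasurableSpace E] [BorelSpace E] [SecondCountableTopology E]
    {μ : Measure E} [μ.HasTemperateGrowth] {a : E → ℝ} (ha : AEStronglyMeasurable a μ) {C : ℝ}
    {k : ℕ} (hC : ∀ x, ‖a x‖ ≤ C * (1 + ‖x‖) ^ k) (f : 𝓢(E, F)) (p : ℝ≥0∞) :
    MemLp (fun x => a x • f x) p μ := by
  obtain ⟨m, hm⟩ := ‹μ.HasTemperateGrowth›.exists_eLpNorm_lt_top p
  have hpos (x : E) : 0 < 1 + ‖x‖ := by positivity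
  have hweight : MemLp (fun x : E => (1 + ‖x‖) ^ (-m : ℝ)) p μ :=
    ⟨(Continuous.rpow_const (by fun_prop) fun x => .inl (hpos x).ne').aestronglyMeasurable, hm⟩
  obtain ⟨S, hS⟩ : ∃ S, ∀ x, (1 + ‖x‖) ^ (k + m) * ‖f x‖ ≤ S :=
    ⟨_, fun x => by
      simpa using SchwartzMap.one_add_le_sup_seminorm_apply (𝕜 := ℝ) (m := (k + m, 0)) le_rfl
        le_rfl f x⟩
  have hC₀ : 0 ≤ C := by simpa using (norm_nonneg _).trans (hC 0)
  refine hweight.of_le_mul (c := C * S) (ha.smul f.continuous.aestronglyMeasurable)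
    (ae_of_all μ fun x => ?_)
  calc ‖a x • f x‖ ≤ C * (1 + ‖x‖) ^ k * ‖f x‖ := by
        rw [norm_smul]
        gcongr
        exact hC x
    _ = C * ((1 + ‖x‖) ^ (k + m) * ‖f x‖) * (1 + ‖x‖) ^ (-m : ℝ) := by
        rw [Real.rpow_neg (hpos x).le, Real.rpow_natCast, pow_add]
        field_simp [(hpos x).ne']
    _ ≤ C * S * (1 + ‖x‖) ^ (-m : ℝ) := by
        gcongr
        exact hS x
    _ = C * S * ‖(1 + ‖x‖) ^ (-m : ℝ)‖ := by
        rw [Real.norm_of_nonneg (by positivity)]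

lemma lipschitzWith_fderiv_apply {φ : E → F} {K : ℝ≥0} (h : LipschitzWith K (fderiv ℝ φ)) (w : E) :
    LipschitzWith (‖w‖₊ * K) fun x => fderiv ℝ φ x w :=
  LipschitzWith.of_dist_le_mul fun x y => by
    rw [dist_eq_norm, ← sub_apply]
    calc ‖(fderiv ℝ φ x - fderiv ℝ φ y) w‖ ≤ ‖fderiv ℝ φ x - fderiv ℝ φ y‖ * ‖w‖ :=
          ContinuousLinearMap.le_opNorm _ w
      _ ≤ K * dist x y * ‖w‖ := by
          rw [← dist_eq_norm]
          gcongr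
          exact h.dist_le_mul x y
      _ = _ := by
          push_cast
          ring

lemma lipschitzWith_fderiv_of_iteratedFDeriv_two_le {φ : E → F} (hφ : ContDiff ℝ 2 φ) {K : ℝ≥0}
    (hK : ∀ x, ‖iteratedFDeriv ℝ 2 φ x‖ ≤ K) : LipschitzWith K (fderiv ℝ φ) :=
  lipschitzWith_of_nnnorm_fderiv_le ((hφ.fderiv_right (m := 1) le_rfl).differentiable one_ne_zero)
    fun x => by
      rw [← NNReal.coe_le_coe, coe_nnnorm, ← norm_iteratedFDeriv_one, norm_iteratedFDeriv_fderiv]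
      exact hK x

end PolynomialGrowth

section Momentum

variable {E : Type*} [NormedAddCommGroup E] [NormedSpace ℝ E]

/-- The magnetic momentum `½ (-i ∂_v) + a` in the direction `v` with potential `a`. The factor `½`
makes `A` and `B` the momenta in the two coordinate directions of the plane. -/
def momentum (v : E) (a : E → ℝ) (f : E → ℂ) (x : E) : ℂ :=
  -I * fderiv ℝ f x v / 2 + a x * f x

variable {v : E} {a : E → ℝ} {f g : E → ℂ}

lemma momentum_comp_add_right (v : E) (a : E → ℝ) (f : E → ℂ) (q x : E) :
    momentum v a (fun y => f (y + q)) x =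
      momentum v a f (x + q) + ((a x - a (x + q) : ℝ) : ℂ) * f (x + q) := by
  simp only [momentum, fderiv_comp_add_right]
  push_cast
  ring

lemma momentum_mul {x : E} (hg : DifferentiableAt ℝ g x) (hf : DifferentiableAt ℝ f x) :
    momentum v a (fun y => g y * f y) x =
      g x * momentum v a f x - I / 2 * fderiv ℝ g x v * f x := by
  simp only [momentum, fderiv_fun_mul hg hf, add_apply, smul_apply, smul_eq_mul]
  ring

lemma momentum_ofReal_mul {β : E → ℝ} {x : E} (hβ : DifferentiableAt ℝ β x)
    (hf : DifferentiableAt ℝ f x) :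
    momentum v a (fun y => β y * f y) x =
      β x * momentum v a f x - I / 2 * fderiv ℝ β x v * f x := by
  have h : HasFDerivAt (fun y => (β y : ℂ)) (ofRealCLM ∘L fderiv ℝ β x) x :=
    ofRealCLM.hasFDerivAt.comp x hβ.hasFDerivAt
  rw [momentum_mul h.differentiableAt hf, h.fderiv]
  rfl

lemma momentum_exp_mul (ℓ : E →L[ℝ] ℝ) {x : E} (hf : DifferentiableAt ℝ f x) :
    momentum v a (fun y => exp (I * ℓ y) * f y) x =
      exp (I * ℓ x) * (momentum v a f x + ((ℓ v / 2 : ℝ) : ℂ) * f x) := by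
  have h : HasFDerivAt (fun y => exp (I * ℓ y)) (exp (I * ℓ x) • I • (ofRealCLM ∘L ℓ)) x :=
    ((ofRealCLM ∘L ℓ).hasFDerivAt.const_mul I).cexp
  rw [momentum_mul h.differentiableAt hf, h.fderiv]
  simp only [smul_apply, ContinuousLinearMap.comp_apply, ofRealCLM_apply, smul_eq_mul]
  push_cast
  linear_combination (-exp (I * ℓ x) * ℓ v / 2 * f x) * I_sq

/-- The function `e^{iℓ(x)} β(x) f(x + q)`: `f` is translated by `-q`, cut off by `β` and gauged by
the linear phase `ℓ`. -/
def localize (ℓ : E →L[ℝ] ℝ) (β : E → ℝ) (q : E) (f : E → ℂ) (x : E) : ℂ :=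
  exp (I * ℓ x) * β x * f (x + q)

lemma momentum_localize (ℓ : E →L[ℝ] ℝ) {β : E → ℝ} (hβ : Differentiable ℝ β) (q : E)
    (hf : Differentiable ℝ f) (x : E) :
    momentum v a (localize ℓ β q f) x =
      exp (I * ℓ x) * (β x * momentum v a f (x + q) +
        (((β x * (ℓ v / 2 - a (x + q) + a x) : ℝ) : ℂ) - I / 2 * fderiv ℝ β x v) * f (x + q)) := by
  have hfq : Differentiable ℝ fun y => f (y + q) := by fun_prop
  have hβf : Differentiable ℝ fun y => (β y : ℂ) * f (y + q) :=
    (ofRealCLM.differentiable.comp hβ).mul hfq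
  have h : localize ℓ β q f = fun y => exp (I * ℓ y) * (β y * f (y + q)) :=
    funext fun y => mul_assoc _ _ _
  rw [h, momentum_exp_mul ℓ (hβf x), momentum_ofReal_mul (hβ x) (hfq x), momentum_comp_add_right]
  push_cast
  ring

/- The gauge `ℓ v = 2 a(q)` replaces the unbounded potential `a` near `q` by `a - a(q)`, which the
Lipschitz bound controls uniformly in `q`. -/
lemma norm_momentum_localize_le {K : ℝ≥0} (ha : LipschitzWith K a) {ℓ : E →L[ℝ] ℝ} {q : E}
    (hℓ : ℓ v = 2 * a q) {β : E → ℝ} (hβ : Differentiable ℝ β) (hf : Differentiable ℝ f) (x : E) :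
    ‖momentum v a (localize ℓ β q f) x‖ ≤
      |β x| * ‖momentum v a f (x + q)‖ +
        (|β x| * (2 * K * ‖x‖ + |a 0|) + |fderiv ℝ β x v|) * ‖f (x + q)‖ := by
  have hq : |a q - a (x + q)| ≤ K * ‖x‖ := by simpa using ha.norm_sub_le q (x + q)
  have h0 : |a x - a 0| ≤ K * ‖x‖ := by simpa using ha.norm_sub_le x 0
  have hpot : |ℓ v / 2 - a (x + q) + a x| ≤ 2 * K * ‖x‖ + |a 0| := by
    rw [hℓ, mul_div_cancel_left₀ _ two_ne_zero]
    calc |a q - a (x + q) + a x| = |(a q - a (x + q)) + (a x - a 0) + a 0| := by ring_nf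
      _ ≤ |a q - a (x + q)| + |a x - a 0| + |a 0| := abs_add_three _ _ _
      _ ≤ 2 * K * ‖x‖ + |a 0| := by linarith
  have hcoeff : ‖((β x * (ℓ v / 2 - a (x + q) + a x) : ℝ) : ℂ) - I / 2 * fderiv ℝ β x v‖ ≤
      |β x| * (2 * K * ‖x‖ + |a 0|) + |fderiv ℝ β x v| := by
    refine (norm_sub_le _ _).trans (add_le_add ?_ ?_)
    · rw [norm_real, Real.norm_eq_abs, abs_mul]
      gcongr
    · rw [norm_mul, norm_div, norm_I, norm_real, Real.norm_eq_abs, RCLike.norm_ofNat]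
      linarith [abs_nonneg (fderiv ℝ β x v)]
  rw [momentum_localize ℓ hβ q hf, norm_mul, norm_exp_I_mul_ofReal, one_mul]
  refine (norm_add_le _ _).trans ?_
  rw [norm_mul, norm_mul, norm_real, Real.norm_eq_abs]
  gcongr

lemma exists_norm_momentum_localize_le {K : ℝ≥0} (ha : LipschitzWith K a) (v : E) {β : E → ℝ}
    (hβ : ContDiff ℝ 1 β) (hβ_supp : HasCompactSupport β) :
    ∃ C : ℝ, ∀ (q : E) (ℓ : E →L[ℝ] ℝ), ℓ v = 2 * a q → ∀ f : E → ℂ, Differentiable ℝ f → ∀ x,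
      ‖momentum v a (localize ℓ β q f) x‖ ≤ C * (‖momentum v a f (x + q)‖ + ‖f (x + q)‖) := by
  let W (x : E) : ℝ := |β x| * (1 + 2 * K * ‖x‖ + |a 0|) + |fderiv ℝ β x v|
  have hW : Continuous W :=
    (hβ.continuous.abs.mul (by fun_prop)).add
      ((hβ.continuous_fderiv one_ne_zero).clm_apply continuous_const).abs
  have hW_supp : HasCompactSupport W :=
    hβ_supp.abs.mul_right.add (hβ_supp.fderiv_apply ℝ v).abs
  obtain ⟨C, hC⟩ := hW_supp.exists_bound_of_continuous hW
  refine ⟨C, fun q ℓ hℓ f hf x => ?_⟩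
  calc ‖momentum v a (localize ℓ β q f) x‖
      ≤ |β x| * ‖momentum v a f (x + q)‖ +
          (|β x| * (2 * K * ‖x‖ + |a 0|) + |fderiv ℝ β x v|) * ‖f (x + q)‖ :=
        norm_momentum_localize_le ha hℓ (hβ.differentiable one_ne_zero) hf x
    _ ≤ W x * ‖momentum v a f (x + q)‖ + W x * ‖f (x + q)‖ := by
        have h : 0 ≤ |β x| * (2 * K * ‖x‖ + |a 0|) + |fderiv ℝ β x v| := by positivity
        gcongr <;> simp only [W] <;> linarith [abs_nonneg (β x)]
    _ ≤ C * (‖momentum v a f (x + q)‖ + ‖f (x + q)‖) := by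
        rw [← mul_add]
        gcongr
        exact (le_abs_self _).trans (hC x)

end Momentum

section Energy

variable {E : Type*} [NormedAddCommGroup E] [NormedSpace ℝ E] [MeasurableSpace E]
  {μ : Measure E} {v : E} {a : E → ℝ} {f g : E → ℂ}

lemma measurable_momentum [BorelSpace E] (v : E) (ha : Continuous a) (hf : Continuous f) :
    Measurable (momentum v a f) :=
  (((measurable_fderiv_apply_const ℝ f v).const_mul (-I)).div_const 2).add
    ((continuous_ofReal.comp ha).mul hf).measurable

theorem exists_eLpNorm_momentum_localize_le [BorelSpace E] [μ.IsAddRightInvariant]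
    {K : ℝ≥0} (ha : LipschitzWith K a) (v : E) {β : E → ℝ}
    (hβ : ContDiff ℝ 1 β) (hβ_supp : HasCompactSupport β) :
    ∃ C > 0, ∀ (q : E) (ℓ : E →L[ℝ] ℝ), ℓ v = 2 * a q → ∀ f : E → ℂ, Differentiable ℝ f →
      eLpNorm (momentum v a (localize ℓ β q f)) 2 μ ≤
        ENNReal.ofReal C * (eLpNorm (momentum v a f) 2 μ + eLpNorm f 2 μ) := by
  obtain ⟨C, hC⟩ := exists_norm_momentum_localize_le ha v hβ hβ_supp
  refine ⟨max C 1, by positivity, fun q ℓ hℓ f hf => eLpNorm_le_of_norm_le_translate one_le_two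
    (measurable_momentum v ha.continuous hf.continuous).aestronglyMeasurable
    hf.continuous.aestronglyMeasurable q fun x => (hC q ℓ hℓ f hf x).trans ?_⟩
  gcongr
  exact le_max_left C 1

/-- A class of functions on which `momentum v a` is a symmetric operator of `L²(μ)`: those that are
differentiable and for which both terms of the momentum are separately in `L²`. -/
structure MomentumDomain (μ : Measure E) (v : E) (a : E → ℝ) (f : E → ℂ) : Prop where
  differentiable : Differentiable ℝ f
  memLp : MemLp f 2 μ
  memLp_fderiv : MemLp (fun x => fderiv ℝ f x v) 2 μ
  memLp_potential : MemLp (fun x => a x • f x) 2 μ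

lemma MomentumDomain.memLp_momentum (hf : MomentumDomain μ v a f) :
    MemLp (momentum v a f) 2 μ := by
  refine ((hf.memLp_fderiv.const_mul (-I / 2)).add hf.memLp_potential).ae_eq
    (ae_of_all μ fun x => ?_)
  simp only [momentum, Pi.add_apply, real_smul]
  ring

variable [FiniteDimensional ℝ E] [BorelSpace E] [μ.IsAddHaarMeasure]

lemma MomentumDomain.integral_inner_momentum (hf : MomentumDomain μ v a f)
    (hg : MomentumDomain μ v a g) :
    ∫ x, inner ℝ (f x) (momentum v a g x) ∂μ = ∫ x, inner ℝ (momentum v a f x) (g x) ∂μ := by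
  have hG (x : E) : fderiv ℝ (fun y => -I / 2 * g y) x v = -I / 2 * fderiv ℝ g x v := by
    rw [fderiv_const_mul (hg.differentiable x)]
    rfl
  have hfG' : Integrable (fun x => inner ℝ (f x) (fderiv ℝ (fun y => -I / 2 * g y) x v)) μ := by
    simp only [hG]
    exact integrable_inner_of_memLp_two hf.memLp (hg.memLp_fderiv.const_mul _)
  have hf'G : Integrable (fun x => inner ℝ (fderiv ℝ f x v) (-I / 2 * g x)) μ :=
    integrable_inner_of_memLp_two hf.memLp_fderiv (hg.memLp.const_mul _)
  have hparts : ∫ x, inner ℝ (f x) (fderiv ℝ (fun y => -I / 2 * g y) x v) ∂μ =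
      -∫ x, inner ℝ (fderiv ℝ f x v) (-I / 2 * g x) ∂μ :=
    integral_bilinear_fderiv_right_eq_neg_left_of_integrable (B := innerSL ℝ) hf'G hfG'
      (integrable_inner_of_memLp_two hf.memLp (hg.memLp.const_mul _))
      (fun x _ => hf.differentiable x) fun x _ => (hg.differentiable x).const_mul _
  have hpointwise (x : E) : inner ℝ (f x) (momentum v a g x) - inner ℝ (momentum v a f x) (g x) =
      inner ℝ (f x) (fderiv ℝ (fun y => -I / 2 * g y) x v) +
        inner ℝ (fderiv ℝ f x v) (-I / 2 * g x) := by
    rw [hG]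
    simp only [momentum, Complex.inner, map_add, map_mul, map_div₀, map_neg, conj_I, conj_ofNat,
      conj_ofReal, ← sub_re, ← add_re]
    congr 1
    ring
  rw [← sub_eq_zero, ← integral_sub (integrable_inner_of_memLp_two hf.memLp hg.memLp_momentum)
    (integrable_inner_of_memLp_two hf.memLp_momentum hg.memLp), integral_congr_ae
    (ae_of_all μ hpointwise), integral_add hfG' hf'G, hparts, neg_add_cancel]

variable {K : ℝ≥0}

lemma memLp_smul_schwartzMap_of_lipschitzWith (ha : LipschitzWith K a) (u : 𝓢(E, ℂ)) :
    MemLp (fun x => a x • u x) 2 μ :=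
  memLp_smul_schwartzMap (k := 1) ha.continuous.aestronglyMeasurable
    (fun x => by simpa using norm_le_mul_one_add_norm_of_lipschitzWith ha x) u 2

lemma momentumDomain_schwartzMap (v : E) (ha : LipschitzWith K a) (u : 𝓢(E, ℂ)) :
    MomentumDomain μ v a u where
  differentiable := u.differentiable
  memLp := u.memLp 2 μ
  memLp_fderiv := (∂_{v} u).memLp 2 μ
  memLp_potential := memLp_smul_schwartzMap_of_lipschitzWith ha u

lemma momentumDomain_momentum_schwartzMap (v : E) (ha : Differentiable ℝ a)
    (haK : LipschitzWith K a) (u : 𝓢(E, ℂ)) : MomentumDomain μ v a (momentum v a u) := by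
  have hmomentum : momentum v a u = fun x => -I / 2 * (∂_{v} u) x + a x • u x := by
    funext x
    rw [SchwartzMap.lineDerivOp_apply_eq_fderiv, momentum, real_smul]
    ring
  have hderiv (x : E) : fderiv ℝ (fun y => -I / 2 * (∂_{v} u) y + a y • u y) x v =
      -I / 2 * (∂_{v} (∂_{v} u)) x + (a x • (∂_{v} u) x + fderiv ℝ a x v • u x) := by
    rw [fderiv_fun_add ((∂_{v} u).differentiableAt.const_mul _)
      ((ha x).fun_smul u.differentiableAt), fderiv_const_mul (∂_{v} u).differentiableAt,
      fderiv_fun_smul (ha x) u.differentiableAt]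
    rfl
  have hbound (x : E) : ‖fderiv ℝ a x v‖ ≤ K * ‖v‖ * (1 + ‖x‖) ^ 0 := by
    simpa using (fderiv ℝ a x).le_of_opNorm_le (norm_fderiv_le_of_lipschitz ℝ haK) v
  have hsq (x : E) : ‖a x ^ 2‖ ≤ (‖a 0‖ + K) ^ 2 * (1 + ‖x‖) ^ 2 := by
    rw [norm_pow, ← mul_pow]
    exact pow_le_pow_left₀ (norm_nonneg _) (norm_le_mul_one_add_norm_of_lipschitzWith haK x) 2
  refine ⟨?_, (momentumDomain_schwartzMap v haK u).memLp_momentum, ?_, ?_⟩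
  · rw [hmomentum]
    exact ((∂_{v} u).differentiable.const_mul _).add (ha.smul u.differentiable)
  · rw [hmomentum]
    simp only [hderiv]
    exact (((∂_{v} (∂_{v} u)).memLp 2 μ).const_mul _).add
      ((memLp_smul_schwartzMap_of_lipschitzWith haK _).add (memLp_smul_schwartzMap
        (measurable_fderiv_apply_const ℝ a v).aestronglyMeasurable hbound u 2))
  · refine (((memLp_smul_schwartzMap_of_lipschitzWith haK (∂_{v} u)).const_mul (-I / 2)).add
      (memLp_smul_schwartzMap (haK.continuous.pow 2).aestronglyMeasurable hsq u 2)).ae_eq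
      (ae_of_all μ fun x => ?_)
    simp only [hmomentum, Pi.add_apply, Pi.pow_apply, real_smul, ofReal_pow]
    ring

lemma integral_inner_momentum_momentum (v : E) (ha : Differentiable ℝ a)
    (haK : LipschitzWith K a) (u : 𝓢(E, ℂ)) :
    ∫ x, inner ℝ (u x) (momentum v a (momentum v a u) x) ∂μ = ∫ x, ‖momentum v a u x‖ ^ 2 ∂μ := by
  simp only [← real_inner_self_eq_norm_sq]
  exact (momentumDomain_schwartzMap v haK u).integral_inner_momentum
    (momentumDomain_momentum_schwartzMap v ha haK u)

variable {ι : Type*} [Fintype ι] {w : ι → E} {b : ι → E → ℝ} {L : ι → ℝ≥0}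

lemma sum_integral_norm_momentum_sq_le (hb : ∀ i, Differentiable ℝ (b i))
    (hbL : ∀ i, LipschitzWith (L i) (b i)) {V : E → ℝ} {M : ℝ} (hV : ∀ x, V x ≤ M) (u : 𝓢(E, ℂ))
    (hu : ∀ x, ∑ i, momentum (w i) (b i) (momentum (w i) (b i) u) x = V x * u x) :
    ∑ i, ∫ x, ‖momentum (w i) (b i) u x‖ ^ 2 ∂μ ≤ M * ∫ x, ‖u x‖ ^ 2 ∂μ := by
  have hintegrable (i : ι) :
      Integrable (fun x => inner ℝ (u x) (momentum (w i) (b i) (momentum (w i) (b i) u) x)) μ :=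
    integrable_inner_of_memLp_two (u.memLp 2 μ)
      (momentumDomain_momentum_schwartzMap (w i) (hb i) (hbL i) u).memLp_momentum
  have hsq : Integrable (fun x => ‖u x‖ ^ 2) μ := (u.memLp 2 μ).norm.integrable_sq
  simp only [← integral_inner_momentum_momentum _ (hb _) (hbL _)]
  rw [← integral_finsetSum _ fun i _ => hintegrable i, ← integral_const_mul]
  refine integral_mono (integrable_finsetSum _ fun i _ => hintegrable i) (hsq.const_mul M)
    fun x => ?_
  calc ∑ i, inner ℝ (u x) (momentum (w i) (b i) (momentum (w i) (b i) u) x)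
      = inner ℝ (u x) (V x • u x) := by rw [← inner_sum, hu, real_smul]
    _ = V x * ‖u x‖ ^ 2 := by rw [inner_smul_right, real_inner_self_eq_norm_sq]
    _ ≤ M * ‖u x‖ ^ 2 := by
        gcongr
        exact hV x

theorem eLpNorm_momentum_le_of_sum_momentum_momentum_eq (hb : ∀ i, Differentiable ℝ (b i))
    (hbL : ∀ i, LipschitzWith (L i) (b i)) {V : E → ℝ} {M : ℝ} (hV : ∀ x, V x ≤ M) (u : 𝓢(E, ℂ))
    (hu : ∀ x, ∑ i, momentum (w i) (b i) (momentum (w i) (b i) u) x = V x * u x) (i : ι) :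
    eLpNorm (momentum (w i) (b i) u) 2 μ ≤ ENNReal.ofReal √M * eLpNorm u 2 μ :=
  eLpNorm_two_le_of_integral_sq_le (momentumDomain_schwartzMap (w i) (hbL i) u).memLp_momentum
    (u.memLp 2 μ)
    ((Finset.single_le_sum (f := fun j => ∫ x, ‖momentum (w j) (b j) u x‖ ^ 2 ∂μ)
      (fun _ _ => integral_nonneg fun _ => sq_nonneg _) (Finset.mem_univ i)).trans
      (sum_integral_norm_momentum_sq_le hb hbL hV u hu))

end Energy

section Plane

/-- The clockwise quarter turn `(x₁, x₂) ↦ (x₂, -x₁)`, so that `σ(x, ξ) = ξ · J x`. -/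
def clockwiseTurn : R2 →L[ℝ] R2 :=
  (EuclideanSpace.proj 1 : R2 →L[ℝ] ℝ).smulRight (EuclideanSpace.single 0 1) -
    (EuclideanSpace.proj 0 : R2 →L[ℝ] ℝ).smulRight (EuclideanSpace.single 1 1)

/-- The component `½ ∇φ · J e_j` of the magnetic potential in the `j`-th coordinate direction,
with `J` the clockwise quarter turn. -/
def magneticPotential (φ : R2 → ℝ) (j : Fin 2) (x : R2) : ℝ :=
  fderiv ℝ φ x (clockwiseTurn (EuclideanSpace.single j 1)) / 2

/-- The momentum in the `j`-th coordinate direction: `A` for `j = 0` and `B` for `j = 1`. -/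
def planeMomentum (φ : R2 → ℝ) (j : Fin 2) : (R2 → ℂ) → R2 → ℂ :=
  momentum (EuclideanSpace.single j 1) (magneticPotential φ j)

variable {φ β : R2 → ℝ} {K : ℝ≥0}

lemma clockwiseTurn_single_zero :
    clockwiseTurn (EuclideanSpace.single 0 1) = -EuclideanSpace.single 1 1 := by
  simp [clockwiseTurn]

lemma clockwiseTurn_single_one :
    clockwiseTurn (EuclideanSpace.single 1 1) = EuclideanSpace.single 0 1 := by
  simp [clockwiseTurn]

lemma opA_eq_planeMomentum (φ : R2 → ℝ) : opA φ = planeMomentum φ 0 := by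
  funext f x
  simp only [opA, Dop, pdC, pdR, planeMomentum, momentum, magneticPotential,
    clockwiseTurn_single_zero, map_neg]
  push_cast
  ring

lemma opB_eq_planeMomentum (φ : R2 → ℝ) : opB φ = planeMomentum φ 1 := by
  funext f x
  simp only [opB, Dop, pdC, pdR, planeMomentum, momentum, magneticPotential,
    clockwiseTurn_single_one]

lemma wFun_eq_localize (φ β : R2 → ℝ) (q : R2) (u : R2 → ℂ) :
    wFun φ β q u = localize (fderiv ℝ φ q ∘L clockwiseTurn) β q u := by
  funext x
  simp [wFun, localize, sigmaPhase, clockwiseTurn, pdR]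

lemma magneticPotential_eq_fderiv_apply_smul (φ : R2 → ℝ) (j : Fin 2) :
    magneticPotential φ j =
      fun x => fderiv ℝ φ x ((2⁻¹ : ℝ) • clockwiseTurn (EuclideanSpace.single j 1)) := by
  funext x
  rw [magneticPotential, map_smul, smul_eq_mul, div_eq_inv_mul]

lemma differentiable_magneticPotential (hφ : ContDiff ℝ 2 φ) (j : Fin 2) :
    Differentiable ℝ (magneticPotential φ j) := by
  rw [magneticPotential_eq_fderiv_apply_smul]
  exact ((hφ.fderiv_right (m := 1) le_rfl).differentiable one_ne_zero).clm_apply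
    (differentiable_const _)

lemma exists_lipschitzWith_magneticPotential (hφ : LipschitzWith K (fderiv ℝ φ)) (j : Fin 2) :
    ∃ L, LipschitzWith L (magneticPotential φ j) := by
  rw [magneticPotential_eq_fderiv_apply_smul]
  exact ⟨_, lipschitzWith_fderiv_apply hφ _⟩

lemma lapR_le (hφ : LipschitzWith K (fderiv ℝ φ)) (x : R2) : lapR φ x ≤ 2 * K := by
  have hpdR (j : Fin 2) : pdR j (pdR j φ) x ≤ K := by
    have hlip : LipschitzWith K (pdR j φ) := by
      simpa using! lipschitzWith_fderiv_apply hφ (EuclideanSpace.single j 1)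
    simpa using! (le_abs_self _).trans
      ((fderiv ℝ (pdR j φ) x).le_of_opNorm_le (norm_fderiv_le_of_lipschitz ℝ hlip)
        (EuclideanSpace.single j 1))
  rw [lapR]
  linarith [hpdR 0, hpdR 1]

lemma eLpNorm_planeMomentum_le_of_opP_eq_zero (hφ : ContDiff ℝ 2 φ)
    (hφK : LipschitzWith K (fderiv ℝ φ)) {l Λ : ℝ} (hl : |l| ≤ Λ) (u : 𝓢(R2, ℂ))
    (hu : ∀ x, opP φ l u x = 0) (j : Fin 2) :
    eLpNorm (planeMomentum φ j u) 2 volume ≤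
      ENNReal.ofReal √(K / 2 + Λ ^ 2) * eLpNorm u 2 volume := by
  choose L hL using exists_lipschitzWith_magneticPotential hφK
  have hV (x : R2) : lapR φ x / 4 + l ^ 2 ≤ K / 2 + Λ ^ 2 := by
    linarith [lapR_le hφK x, sq_le_sq.2 (hl.trans (le_abs_self Λ))]
  have hsum (x : R2) : ∑ i, planeMomentum φ i (planeMomentum φ i u) x =
      ((lapR φ x / 4 + l ^ 2 : ℝ) : ℂ) * u x := by
    have h := hu x
    rw [opP, opA_eq_planeMomentum, opB_eq_planeMomentum] at h
    rw [Fin.sum_univ_two]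
    push_cast at h ⊢
    linear_combination h
  exact eLpNorm_momentum_le_of_sum_momentum_momentum_eq (μ := volume)
    (w := fun i => EuclideanSpace.single i 1)
    (differentiable_magneticPotential hφ) hL hV u hsum j

lemma exists_eLpNorm_planeMomentum_wFun_le (hφK : LipschitzWith K (fderiv ℝ φ))
    (hβ : ContDiff ℝ 1 β) (hβ_supp : HasCompactSupport β) (j : Fin 2) :
    ∃ C > 0, ∀ (q : R2) (f : R2 → ℂ), Differentiable ℝ f →
      eLpNorm (planeMomentum φ j (wFun φ β q f)) 2 volume ≤
        ENNReal.ofReal C * (eLpNorm (planeMomentum φ j f) 2 volume + eLpNorm f 2 volume) := by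
  obtain ⟨L, hL⟩ := exists_lipschitzWith_magneticPotential hφK j
  obtain ⟨C, hC₀, hC⟩ :=
    exists_eLpNorm_momentum_localize_le (μ := volume) hL (EuclideanSpace.single j 1) hβ hβ_supp
  refine ⟨C, hC₀, fun q f hf => ?_⟩
  rw [wFun_eq_localize]
  exact hC q _ (mul_div_cancel₀ _ two_ne_zero).symm f hf

lemma exists_eLpNorm_planeMomentum_wFun_le_of_opP_eq_zero (hφ : ContDiff ℝ 2 φ)
    (hφK : LipschitzWith K (fderiv ℝ φ)) (hβ : ContDiff ℝ 1 β) (hβ_supp : HasCompactSupport β)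
    (Λ : ℝ) (j : Fin 2) :
    ∃ C > 0, ∀ l : ℝ, |l| ≤ Λ → ∀ q : R2, ∀ u : 𝓢(R2, ℂ), (∀ x, opP φ l u x = 0) →
      eLpNorm (planeMomentum φ j (wFun φ β q u)) 2 volume ≤
        ENNReal.ofReal C * eLpNorm u 2 volume := by
  obtain ⟨C, hC₀, hC⟩ := exists_eLpNorm_planeMomentum_wFun_le hφK hβ hβ_supp j
  refine ⟨C * (√(K / 2 + Λ ^ 2) + 1), by positivity, fun l hl q u hu => ?_⟩
  calc eLpNorm (planeMomentum φ j (wFun φ β q u)) 2 volume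
      ≤ ENNReal.ofReal C * (eLpNorm (planeMomentum φ j u) 2 volume + eLpNorm u 2 volume) :=
        hC q u u.differentiable
    _ ≤ ENNReal.ofReal C *
          (ENNReal.ofReal √(K / 2 + Λ ^ 2) * eLpNorm u 2 volume + eLpNorm u 2 volume) := by
        gcongr
        exact eLpNorm_planeMomentum_le_of_opP_eq_zero hφ hφK hl u hu j
    _ = ENNReal.ofReal (C * (√(K / 2 + Λ ^ 2) + 1)) * eLpNorm u 2 volume := by
        rw [ENNReal.ofReal_mul hC₀.le, ENNReal.ofReal_add (Real.sqrt_nonneg _) zero_le_one,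
          ENNReal.ofReal_one]
        ring

end Plane

theorem stmt14_general {φ : R2 → ℝ} (hφ : ContDiff ℝ 2 φ) {K : ℝ}
    (hφK : ∀ x, ‖iteratedFDeriv ℝ 2 φ x‖ ≤ K) {β : R2 → ℝ} (hβ : ContDiff ℝ 1 β)
    (hβ_supp : HasCompactSupport β) (Λ : ℝ) :
    ∃ C > 0, ∀ l : ℝ, |l| ≤ Λ → ∀ q : R2, ∀ u : 𝓢(R2, ℂ), (∀ x, opP φ l u x = 0) →
      eLpNorm (opA φ (wFun φ β q u)) 2 volume ≤ ENNReal.ofReal C * eLpNorm u 2 volume ∧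
      eLpNorm (opB φ (wFun φ β q u)) 2 volume ≤ ENNReal.ofReal C * eLpNorm u 2 volume := by
  have hlip : LipschitzWith K.toNNReal (fderiv ℝ φ) :=
    lipschitzWith_fderiv_of_iteratedFDeriv_two_le hφ fun x => (hφK x).trans K.le_coe_toNNReal
  choose C hC₀ hC using
    exists_eLpNorm_planeMomentum_wFun_le_of_opP_eq_zero hφ hlip hβ hβ_supp Λ
  refine ⟨max (C 0) (C 1), lt_max_of_lt_left (hC₀ 0), fun l hl q u hu => ?_⟩
  rw [opA_eq_planeMomentum, opB_eq_planeMomentum]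
  constructor
  · grw [hC 0 l hl q u hu, ← le_max_left (C 0) (C 1)]
  · grw [hC 1 l hl q u hu, ← le_max_right (C 0) (C 1)]

/-- For `λ ∈ [0,Λ]` and solutions of `P u = 0`, the localized conjugated function
`w(x) = e^{iσ(x,∇φ(q))} β(x) u(x+q)` satisfies `‖Aw‖_{L²}, ‖Bw‖_{L²} ≤ C ‖u‖_{L²}`,
uniformly in `q`. -/
theorem stmt14 (φ : R2 → ℝ) (hφ_smooth : ContDiff ℝ (⊤ : ℕ∞) φ)
    (hφ_bd : ∀ n : ℕ, 2 ≤ n → ∃ C : ℝ, ∀ x : R2, ‖iteratedFDeriv ℝ n φ x‖ ≤ C)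
    (β : R2 → ℝ) (hβ_smooth : ContDiff ℝ (⊤ : ℕ∞) β) (hβ_supp : HasCompactSupport β)
    (hβ_range : ∀ x : R2, 0 ≤ β x ∧ β x ≤ 1)
    (hβ_one : ∀ x : R2, ‖x‖ ≤ 1 → β x = 1) (hβ_zero : ∀ x : R2, 2 ≤ ‖x‖ → β x = 0) :
    ∀ Λ : ℝ, 0 < Λ → ∃ C > 0, ∀ l ∈ Set.Icc (0 : ℝ) Λ, ∀ q : R2, ∀ u : SchwartzMap R2 ℂ,
      (∀ x : R2, opP φ l (⇑u) x = 0) →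
      eLpNorm (opA φ (wFun φ β q (⇑u))) 2 volume ≤
          ENNReal.ofReal C * eLpNorm (⇑u) 2 volume ∧
      eLpNorm (opB φ (wFun φ β q (⇑u))) 2 volume ≤
          ENNReal.ofReal C * eLpNorm (⇑u) 2 volume := by
  intro Λ _
  obtain ⟨K, hK⟩ := hφ_bd 2 le_rfl
  obtain ⟨C, hC₀, hC⟩ := stmt14_general (hφ_smooth.of_le (by norm_cast)) hK
    (hβ_smooth.of_le (by norm_cast)) hβ_supp Λ
  exact ⟨C, hC₀, fun l hl => hC l (abs_le.2 ⟨by linarith [hl.1, hl.2], hl.2⟩)⟩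
end
end

section
/- For every Λ > 0 there is a constant C > 0, depending only on φ, β and Λ, such that for every λ ∈ [0,Λ], every q ∈ ℝ², and every Schwartz function u : ℝ² → ℂ satisfying Pu = 0: ‖β_q u‖_{L^∞(ℝ²)} ≤ C ( ‖P(β_q u)‖_{L²(ℝ²)} + ‖u‖_{L²(ℝ²)} ), where β_q(x) := β(x−q). -/
noncomputable section

open MeasureTheory Complex

/-!
`P` is a magnetic Schrödinger operator: `4P = (D - a)² - Δφ - 4λ²` with potential
`a = (∂₂φ, -∂₁φ)`, which is unbounded, so elliptic estimates for `P` need not be uniform in `q`.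
The field is bounded, however: multiplying by the plane wave `e^{-i⟨k, x⟩}` with `k = a(q)` replaces
`a` by `a - k`, which is `O(1)` on the support of `β_q` uniformly in `q` because the Hessian of `φ`
is bounded. For `v = β_q u` and `w = e^{-i⟨k, x⟩} v` this bounds `|Δw|` by
`4|Pv| + O(|∇w| + |w|)`. Green's identity `‖∇w‖² = -⟨w, Δw⟩` in `L²` lets the gradient term be
absorbed into the left-hand side, and `H² ⊂ L^∞` in dimension less than four (Fourier inversion,
Cauchy–Schwarz and Plancherel) bounds `|w| = |v|`.
-/

open scoped SchwartzMap FourierTransform Laplacian LineDeriv ENNReal NNReal ContDiff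
open scoped InnerProductSpace

section LaplacianSupport

variable {E F : Type*} [NormedAddCommGroup E] [InnerProductSpace ℝ E] [FiniteDimensional ℝ E]
  [NormedAddCommGroup F] [NormedSpace ℝ F]

lemma tsupport_laplacian_subset (f : 𝓢(E, F)) :
    tsupport (Δ f : 𝓢(E, F)) ⊆ tsupport f := by
  refine closure_minimal (fun x hx => ?_) (isClosed_tsupport f)
  contrapose! hx
  rw [Function.notMem_support, SchwartzMap.laplacian_eq_sum (stdOrthonormalBasis ℝ E), sum_apply]
  exact Finset.sum_eq_zero fun i _ => image_eq_zero_of_notMem_tsupport fun h =>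
    hx (SchwartzMap.tsupport_lineDerivOp_subset _ _ (SchwartzMap.tsupport_lineDerivOp_subset _ _ h))

end LaplacianSupport

section SchwartzEstimates

variable {E F : Type*} [NormedAddCommGroup E] [InnerProductSpace ℝ E] [FiniteDimensional ℝ E]
  [MeasurableSpace E] [BorelSpace E]

lemma eLpNorm_eq_ofReal_norm_toLp [NormedAddCommGroup F] [NormedSpace ℝ F] (f : 𝓢(E, F))
    (p : ℝ≥0∞) : eLpNorm f p volume = ENNReal.ofReal ‖f.toLp p volume‖ := by
  rw [SchwartzMap.norm_toLp, ENNReal.ofReal_toReal (f.eLpNorm_lt_top p volume).ne]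

section Sobolev

lemma fourier_laplacian_apply [NormedAddCommGroup F] [NormedSpace ℂ F] [CompleteSpace F]
    (f : 𝓢(E, F)) (ξ : E) :
    𝓕 (Δ f : 𝓢(E, F)) ξ = -((2 * Real.pi * ‖ξ‖) ^ 2 • (𝓕 f : 𝓢(E, F)) ξ) := by
  have hgrowth : ((‖·‖ ^ 2 : E → ℝ)).HasTemperateGrowth :=
    show (fun x : E => ‖x‖ ^ 2).HasTemperateGrowth by fun_prop
  rw [SchwartzMap.laplacian_eq_fourierMultiplierCLM, FourierTransform.fourier_smul,
    SchwartzMap.fourierMultiplierCLM_apply, FourierTransform.fourier_fourierInv_eq,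
    smul_apply, SchwartzMap.smulLeftCLM_apply_apply hgrowth, smul_smul, ← neg_smul,
    neg_mul, mul_pow _ ‖ξ‖]

lemma memLp_two_inv_one_add_norm_sq (hE : Module.finrank ℝ E < 4) :
    MemLp (fun ξ : E => (1 + (2 * Real.pi * ‖ξ‖) ^ 2)⁻¹) 2 volume := by
  have hint : Integrable (fun ξ : E => ((1 : ℝ) + ‖ξ‖ ^ 2) ^ (-4 / 2 : ℝ)) :=
    integrable_rpow_neg_one_add_norm_sq (by exact_mod_cast hE)
  have hmeas : Measurable fun ξ : E => (1 + (2 * Real.pi * ‖ξ‖) ^ 2)⁻¹ := by fun_prop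
  refine (memLp_two_iff_integrable_sq hmeas.aestronglyMeasurable).2
    (hint.mono' (hmeas.pow_const 2).aestronglyMeasurable (.of_forall fun ξ => ?_))
  have hpi : 1 ≤ 2 * Real.pi := by linarith [Real.pi_gt_three]
  rw [show (-4 / 2 : ℝ) = -(2 : ℕ) by norm_num, Real.rpow_neg (by positivity), Real.rpow_natCast,
    ← inv_pow, Real.norm_of_nonneg (by positivity)]
  gcongr
  exact le_mul_of_one_le_left (norm_nonneg ξ) hpi

lemma eLpNorm_two_fourier [NormedAddCommGroup F] [InnerProductSpace ℂ F] [CompleteSpace F]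
    (f : 𝓢(E, F)) : eLpNorm (𝓕 f : 𝓢(E, F)) 2 volume = eLpNorm f 2 volume := by
  rw [eLpNorm_eq_ofReal_norm_toLp, SchwartzMap.norm_fourier_toL2_eq, eLpNorm_eq_ofReal_norm_toLp]

lemma eLpNorm_top_le_eLpNorm_one_fourier [NormedAddCommGroup F] [NormedSpace ℂ F] [CompleteSpace F]
    (f : 𝓢(E, F)) : eLpNorm f ⊤ volume ≤ eLpNorm (𝓕 f : 𝓢(E, F)) 1 volume := by
  rw [eLpNorm_exponent_top, eLpNorm_eq_ofReal_norm_toLp]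
  refine eLpNormEssSup_le_of_ae_bound (.of_forall fun x => ?_)
  have hx : (𝓕 (𝓕 f : 𝓢(E, F)) : 𝓢(E, F)) (-x) = f x := by
    conv_rhs => rw [← FourierTransform.fourierInv_fourier_eq (F := 𝓢(E, F)) f]
    rw [SchwartzMap.fourierInv_coe, Real.fourierInv_eq_fourier_neg, ← SchwartzMap.fourier_coe]
  exact hx ▸ SchwartzMap.norm_fourier_apply_le_toLp_one (𝓕 f : 𝓢(E, F)) (-x)

theorem exists_eLpNorm_top_le_eLpNorm_two_laplacian [NormedAddCommGroup F] [InnerProductSpace ℂ F]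
    [CompleteSpace F] (hE : Module.finrank ℝ E < 4) :
    ∃ C : ℝ≥0, ∀ f : 𝓢(E, F),
      eLpNorm f ⊤ volume ≤ C * (eLpNorm f 2 volume + eLpNorm (Δ f : 𝓢(E, F)) 2 volume) := by
  set k : E → ℝ := fun ξ => (1 + (2 * Real.pi * ‖ξ‖) ^ 2)⁻¹
  have hk : MemLp k 2 volume := memLp_two_inv_one_add_norm_sq hE
  refine ⟨(eLpNorm k 2 volume).toNNReal, fun f => ?_⟩
  rw [ENNReal.coe_toNNReal hk.eLpNorm_ne_top]
  have hfourier : ⇑(𝓕 f : 𝓢(E, F)) = k • ⇑(𝓕 (f - Δ f) : 𝓢(E, F)) := by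
    funext ξ
    have hsub : (𝓕 (f - Δ f) : 𝓢(E, F)) ξ =
        (1 + (2 * Real.pi * ‖ξ‖) ^ 2) • (𝓕 f : 𝓢(E, F)) ξ := by
      rw [sub_eq_add_neg, FourierTransform.fourier_add, FourierTransform.fourier_neg,
        add_apply, neg_apply, fourier_laplacian_apply]
      module
    rw [Pi.smul_apply', hsub, inv_smul_smul₀ (by positivity)]
  calc eLpNorm f ⊤ volume ≤ eLpNorm (𝓕 f : 𝓢(E, F)) 1 volume :=
        eLpNorm_top_le_eLpNorm_one_fourier f
    _ ≤ eLpNorm k 2 volume * eLpNorm (𝓕 (f - Δ f) : 𝓢(E, F)) 2 volume := by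
      rw [hfourier]
      exact eLpNorm_smul_le_mul_eLpNorm (SchwartzMap.continuous _).aestronglyMeasurable hk.1
    _ ≤ eLpNorm k 2 volume * (eLpNorm f 2 volume + eLpNorm (Δ f : 𝓢(E, F)) 2 volume) := by
      rw [eLpNorm_two_fourier]
      gcongr
      exact eLpNorm_sub_le f.continuous.aestronglyMeasurable
        (SchwartzMap.continuous _).aestronglyMeasurable one_le_two

end Sobolev

lemma le_two_mul_add_of_le_add_of_sq_le {a c d s n K₁ K₂ : ℝ} (ha : 0 ≤ a) (hd : 0 ≤ d)
    (hn : 0 ≤ n) (hle : a ≤ c + K₁ * s + K₂ * d) (hs : s ^ 2 ≤ n * (d * a)) :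
    a ≤ 2 * c + (n * K₁ ^ 2 + 2 * K₂) * d := by
  have habsorb : K₁ * s ≤ (a + n * K₁ ^ 2 * d) / 2 := by
    refine le_of_abs_le (abs_le_of_sq_le_sq ?_ (by positivity))
    nlinarith [mul_le_mul_of_nonneg_left hs (sq_nonneg K₁), sq_nonneg (a - n * K₁ ^ 2 * d)]
  linarith

section Green

variable [NormedAddCommGroup F] [InnerProductSpace ℝ F] {ι : Type*} [Fintype ι]

lemma real_inner_toLp_two_eq_integral (f g : 𝓢(E, F)) :
    ⟪f.toLp 2, g.toLp 2⟫_ℝ = ∫ x, ⟪f x, g x⟫_ℝ := by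
  refine integral_congr_ae ?_
  filter_upwards [f.coeFn_toLp 2, g.coeFn_toLp 2] with x hf hg
  rw [hf, hg]

lemma sum_norm_sq_lineDerivOp_toLp_two (b : OrthonormalBasis ι ℝ E) (f : 𝓢(E, F)) :
    ∑ i, ‖(∂_{b i} f : 𝓢(E, F)).toLp 2‖ ^ 2 = -⟪f.toLp 2, (Δ f : 𝓢(E, F)).toLp 2⟫_ℝ := by
  have hparts (m : E) : ⟪f.toLp 2, (∂_{m} (∂_{m} f) : 𝓢(E, F)).toLp 2⟫_ℝ =
      -‖(∂_{m} f : 𝓢(E, F)).toLp 2‖ ^ 2 := by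
    rw [← real_inner_self_eq_norm_sq, real_inner_toLp_two_eq_integral,
      real_inner_toLp_two_eq_integral]
    exact SchwartzMap.integral_bilinear_lineDerivOp_right_eq_neg_left f (∂_{m} f) (innerSL ℝ) m
  have hsum : (Δ f : 𝓢(E, F)).toLp 2 = ∑ i, (∂_{b i} (∂_{b i} f) : 𝓢(E, F)).toLp 2 := by
    rw [SchwartzMap.laplacian_eq_sum b]
    exact map_sum (SchwartzMap.toLpCLM ℝ F 2 volume) _ _
  simp only [hsum, inner_sum, hparts, Finset.sum_neg_distrib, neg_neg]

lemma sq_sum_lpNorm_lineDerivOp_le (b : OrthonormalBasis ι ℝ E) (f : 𝓢(E, F)) :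
    (∑ i, lpNorm (∂_{b i} f : 𝓢(E, F)) 2 volume) ^ 2 ≤
      Fintype.card ι * (lpNorm f 2 volume * lpNorm (Δ f : 𝓢(E, F)) 2 volume) := by
  have hlp (g : 𝓢(E, F)) : lpNorm g 2 volume = ‖g.toLp 2 volume‖ := by
    rw [SchwartzMap.norm_toLp, toReal_eLpNorm (SchwartzMap.continuous g).aestronglyMeasurable]
  simp only [hlp]
  calc (∑ i, ‖(∂_{b i} f : 𝓢(E, F)).toLp 2 volume‖) ^ 2
      ≤ Fintype.card ι * ∑ i, ‖(∂_{b i} f : 𝓢(E, F)).toLp 2 volume‖ ^ 2 :=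
        sq_sum_le_card_mul_sum_sq
    _ ≤ Fintype.card ι * (‖f.toLp 2 volume‖ * ‖(Δ f : 𝓢(E, F)).toLp 2 volume‖) := by
      rw [sum_norm_sq_lineDerivOp_toLp_two]
      gcongr
      exact (neg_le_abs _).trans (abs_real_inner_le_norm _ _)

variable {G : Type*} [NormedAddCommGroup G] {g : E → G} {K₁ K₂ : ℝ}

lemma lpNorm_laplacian_le_of_norm_le (b : OrthonormalBasis ι ℝ E) (f : 𝓢(E, F))
    (hg : MemLp g 2 volume) (hK₁ : 0 ≤ K₁) (hK₂ : 0 ≤ K₂)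
    (h : ∀ x, ‖(Δ f : 𝓢(E, F)) x‖ ≤
      ‖g x‖ + K₁ * ∑ i, ‖(∂_{b i} f : 𝓢(E, F)) x‖ + K₂ * ‖f x‖) :
    lpNorm (Δ f : 𝓢(E, F)) 2 volume ≤ lpNorm g 2 volume +
      K₁ * ∑ i, lpNorm (∂_{b i} f : 𝓢(E, F)) 2 volume + K₂ * lpNorm f 2 volume := by
  have hnorm (w : 𝓢(E, F)) : MemLp (fun x => ‖w x‖) 2 volume := (w.memLp 2 volume).norm
  have hgrad : MemLp (K₁ • ∑ i, fun x => ‖(∂_{b i} f : 𝓢(E, F)) x‖) 2 volume :=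
    (memLp_finsetSum' _ fun i _ => hnorm (∂_{b i} f)).const_smul K₁
  calc lpNorm (Δ f : 𝓢(E, F)) 2 volume
      ≤ lpNorm ((fun x => ‖g x‖) + K₁ • (∑ i, fun x => ‖(∂_{b i} f : 𝓢(E, F)) x‖)
          + K₂ • fun x => ‖f x‖) 2 volume := by
        refine lpNorm_mono_real ((hg.norm.add hgrad).add ((hnorm f).const_smul K₂)) fun x => ?_
        simpa using h x
    _ ≤ lpNorm (fun x => ‖g x‖) 2 volume
          + K₁ * ∑ i, lpNorm (fun x => ‖(∂_{b i} f : 𝓢(E, F)) x‖) 2 volume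
          + K₂ * lpNorm (fun x => ‖f x‖) 2 volume := by
        grw [lpNorm_add_le (hg.norm.add hgrad) one_le_two, lpNorm_add_le hg.norm one_le_two,
          lpNorm_const_smul, lpNorm_const_smul, lpNorm_sum_le (fun i _ => hnorm _) one_le_two]
        simp [abs_of_nonneg, hK₁, hK₂]
    _ = _ := by
        simp only [lpNorm_norm hg.1, lpNorm_norm (SchwartzMap.continuous _).aestronglyMeasurable]

lemma eLpNorm_laplacian_le_of_norm_le (b : OrthonormalBasis ι ℝ E) (f : 𝓢(E, F))
    (hg : AEStronglyMeasurable g) (hK₁ : 0 ≤ K₁) (hK₂ : 0 ≤ K₂)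
    (h : ∀ x, ‖(Δ f : 𝓢(E, F)) x‖ ≤
      ‖g x‖ + K₁ * ∑ i, ‖(∂_{b i} f : 𝓢(E, F)) x‖ + K₂ * ‖f x‖) :
    eLpNorm (Δ f : 𝓢(E, F)) 2 volume ≤ 2 * eLpNorm g 2 volume +
      ENNReal.ofReal (Fintype.card ι * K₁ ^ 2 + 2 * K₂) * eLpNorm f 2 volume := by
  obtain hgtop | hgtop := eq_or_ne (eLpNorm g 2 volume) ⊤
  · simp [hgtop]
  have hgmem : MemLp g 2 volume := ⟨hg, hgtop.lt_top⟩
  rw [← ofReal_lpNorm (SchwartzMap.memLp (Δ f) 2 volume)]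
  calc ENNReal.ofReal (lpNorm (Δ f : 𝓢(E, F)) 2 volume)
      ≤ ENNReal.ofReal (2 * lpNorm g 2 volume +
          (Fintype.card ι * K₁ ^ 2 + 2 * K₂) * lpNorm f 2 volume) := by
        gcongr
        exact le_two_mul_add_of_le_add_of_sq_le lpNorm_nonneg lpNorm_nonneg (Nat.cast_nonneg _)
          (lpNorm_laplacian_le_of_norm_le b f hgmem hK₁ hK₂ h) (sq_sum_lpNorm_lineDerivOp_le b f)
    _ = _ := by
        rw [ENNReal.ofReal_add (mul_nonneg zero_le_two lpNorm_nonneg)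
          (mul_nonneg (by positivity) lpNorm_nonneg), ENNReal.ofReal_mul zero_le_two,
          ENNReal.ofReal_mul (by positivity), ENNReal.ofReal_ofNat, ofReal_lpNorm hgmem,
          ofReal_lpNorm (f.memLp 2 volume)]

end Green

end SchwartzEstimates

section PartialDerivatives

variable {j : Fin 2} {f g : R2 → ℂ} {x : R2}

lemma pdC_add (hf : DifferentiableAt ℝ f x) (hg : DifferentiableAt ℝ g x) :
    pdC j (f + g) x = pdC j f x + pdC j g x := by
  simp [pdC, fderiv_add hf hg]

lemma pdC_const_smul (c : ℂ) (f : R2 → ℂ) : pdC j (c • f) = c • pdC j f := by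
  funext x
  simp [pdC, fderiv_const_smul_field]

lemma pdC_mul (hf : DifferentiableAt ℝ f x) (hg : DifferentiableAt ℝ g x) :
    pdC j (f * g) x = pdC j f x * g x + f x * pdC j g x := by
  simp only [pdC, fderiv_mul hf hg, add_apply, smul_apply, smul_eq_mul]
  ring

lemma pdC_ofReal {a : R2 → ℝ} (ha : DifferentiableAt ℝ a x) :
    pdC j (fun y => (a y : ℂ)) x = pdR j a x := by
  have h : fderiv ℝ (fun y => (a y : ℂ)) x = ofRealCLM ∘L fderiv ℝ a x :=
    (ofRealCLM.hasFDerivAt.comp x ha.hasFDerivAt).fderiv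
  simp [pdC, pdR, h]

end PartialDerivatives

section PlaneWave

variable {E : Type*} [NormedAddCommGroup E] [InnerProductSpace ℝ E]

/-- The plane wave `x ↦ e^{i⟨k, x⟩}`. Multiplication by it is the gauge transformation that shifts
a magnetic potential by the constant vector `k`. -/
def planeWave (k x : E) : ℂ := exp (I * (⟪k, x⟫_ℝ : ℝ))

lemma norm_planeWave (k x : E) : ‖planeWave k x‖ = 1 := by
  rw [planeWave, norm_exp_I_mul_ofReal]

lemma planeWave_mul_planeWave_neg (k : E) : planeWave k * planeWave (-k) = 1 := by
  funext x
  simp [planeWave, ← exp_add]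

lemma contDiff_planeWave (k : E) {n : ℕ∞} : ContDiff ℝ n (planeWave k) :=
  (contDiff_const.mul (ofRealCLM.contDiff.comp (contDiff_const.inner ℝ contDiff_id))).cexp

lemma pdC_planeWave (k : R2) (j : Fin 2) (x : R2) :
    pdC j (planeWave k) x = I * k j * planeWave k x := by
  have hphase : HasFDerivAt (fun y : R2 => ⟪k, y⟫_ℝ) (innerSL ℝ k) x := (innerSL ℝ k).hasFDerivAt
  have h : HasFDerivAt (planeWave k) (planeWave k x • I • (ofRealCLM ∘L innerSL ℝ k)) x :=
    ((ofRealCLM.hasFDerivAt.comp x hphase).const_mul I).cexp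
  simp only [pdC, h.fderiv, smul_apply, ContinuousLinearMap.comp_apply, innerSL_apply_apply,
    EuclideanSpace.inner_single_right, ofRealCLM_apply, smul_eq_mul, one_mul, conj_trivial]
  ring

end PlaneWave

section CovariantDerivative

/-- The `j`-th covariant derivative `D_j - a_j` of a charged particle in the magnetic potential
`a`. -/
def covD (a : R2 → R2) (j : Fin 2) (u : R2 → ℂ) (x : R2) : ℂ := Dop j u x - a x j * u x

variable {a : R2 → R2} {j : Fin 2} {w : R2 → ℂ}

lemma covD_const_smul (a : R2 → R2) (j : Fin 2) (c : ℂ) (u : R2 → ℂ) :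
    covD a j (c • u) = c • covD a j u := by
  funext x
  simp only [covD, Dop, pdC_const_smul, Pi.smul_apply, smul_eq_mul]
  ring

lemma covD_planeWave_mul (k : R2) (hw : Differentiable ℝ w) :
    covD a j (planeWave k * w) = planeWave k * covD (fun x => a x - k) j w := by
  funext x
  have hk : DifferentiableAt ℝ (planeWave k) x :=
    (contDiff_planeWave k (n := 1)).differentiable (by simp) x
  simp only [covD, Dop, pdC_mul hk (hw x), pdC_planeWave, Pi.mul_apply, PiLp.sub_apply, ofReal_sub]
  linear_combination -(k j * planeWave k x * w x) * I_sq

lemma differentiable_covD (ha : Differentiable ℝ a) (hw : Differentiable ℝ w)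
    (hw' : Differentiable ℝ (pdC j w)) : Differentiable ℝ (covD a j w) := by
  have haj : Differentiable ℝ fun x => (a x j : ℂ) :=
    ofRealCLM.differentiable.comp ((differentiable_piLp 2).1 ha j)
  exact (hw'.const_mul (-I)).sub (haj.mul hw)

lemma covD_covD_apply (ha : Differentiable ℝ a) (hw : Differentiable ℝ w)
    (hw' : Differentiable ℝ (pdC j w)) (x : R2) :
    covD a j (covD a j w) x = -pdC j (pdC j w) x + 2 * I * a x j * pdC j w x +
      (I * pdR j (fun y => a y j) x + (a x j : ℂ) ^ 2) * w x := by
  have haj : DifferentiableAt ℝ (fun y => a y j) x := by fun_prop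
  have hajC : DifferentiableAt ℝ (fun y => (a y j : ℂ)) x :=
    ofRealCLM.differentiableAt.comp x haj
  have hcov : covD a j w = -I • pdC j w + (-1 : ℂ) • ((fun y => (a y j : ℂ)) * w) := by
    funext y
    simp [covD, Dop, sub_eq_add_neg]
  have hpd : pdC j (covD a j w) x = -I * pdC j (pdC j w) x -
      (pdR j (fun y => a y j) x * w x + a x j * pdC j w x) := by
    rw [hcov, pdC_add ((hw' x).const_smul _) ((hajC.mul (hw x)).const_smul _), pdC_const_smul,
      pdC_const_smul, Pi.smul_apply, Pi.smul_apply, pdC_mul hajC (hw x), pdC_ofReal haj]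
    simp [sub_eq_add_neg]
  rw [covD, Dop, hpd, covD, Dop]
  linear_combination pdC j (pdC j w) x * I_sq

end CovariantDerivative

section SecondDerivative

variable {E F : Type*} [NormedAddCommGroup E] [NormedSpace ℝ E] [NormedAddCommGroup F]
  [NormedSpace ℝ F] {f : E → F}

lemma differentiable_fderiv (hf : ContDiff ℝ 2 f) : Differentiable ℝ (fderiv ℝ f) :=
  (hf.fderiv_right (m := 1) (by norm_num)).differentiable (by simp)

lemma norm_fderiv_fderiv (f : E → F) (x : E) :
    ‖fderiv ℝ (fderiv ℝ f) x‖ = ‖iteratedFDeriv ℝ 2 f x‖ := by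
  rw [← norm_iteratedFDeriv_one, norm_iteratedFDeriv_fderiv]

lemma norm_fderiv_sub_fderiv_le (hf : ContDiff ℝ 2 f) {M : ℝ}
    (hM : ∀ x, ‖iteratedFDeriv ℝ 2 f x‖ ≤ M) (x y : E) :
    ‖fderiv ℝ f x - fderiv ℝ f y‖ ≤ M * ‖x - y‖ :=
  convex_univ.norm_image_sub_le_of_norm_fderiv_le (fun z _ => differentiable_fderiv hf z)
    (fun z _ => (norm_fderiv_fderiv f z).trans_le (hM z)) (Set.mem_univ y) (Set.mem_univ x)

end SecondDerivative

section MagneticPotential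

variable {φ : R2 → ℝ} {M : ℝ}

/-- The magnetic potential `(∂₂φ, -∂₁φ)` of the weight `φ`, for which `2A = D₁ - a₁` and
`2B = D₂ - a₂`. -/
def magPot (φ : R2 → ℝ) (x : R2) : R2 := !₂[pdR 1 φ x, -pdR 0 φ x]

lemma opA_eq_covD (φ : R2 → ℝ) (u : R2 → ℂ) : opA φ u = (1 / 2 : ℂ) • covD (magPot φ) 0 u := by
  funext x
  simp only [opA, covD, magPot, Pi.smul_apply, smul_eq_mul, PiLp.toLp_apply, Matrix.cons_val_zero,
    ofReal_div, ofReal_ofNat]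
  ring

lemma opB_eq_covD (φ : R2 → ℝ) (u : R2 → ℂ) : opB φ u = (1 / 2 : ℂ) • covD (magPot φ) 1 u := by
  funext x
  simp only [opB, covD, magPot, Pi.smul_apply, smul_eq_mul, PiLp.toLp_apply, Matrix.cons_val_one,
    Matrix.cons_val_fin_one, ofReal_div, ofReal_ofNat, ofReal_neg]
  ring

lemma four_mul_opP_apply (φ : R2 → ℝ) (l : ℝ) (u : R2 → ℂ) (x : R2) :
    4 * opP φ l u x = ∑ j, covD (magPot φ) j (covD (magPot φ) j u) x -
      (lapR φ x + 4 * (l : ℂ) ^ 2) * u x := by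
  simp only [opP, opA_eq_covD, opB_eq_covD, covD_const_smul, Pi.smul_apply, smul_eq_mul,
    Fin.sum_univ_two, ofReal_div, ofReal_ofNat]
  ring

lemma pdR_pdR_eq (hφ : ContDiff ℝ 2 φ) (i j : Fin 2) (x : R2) :
    pdR i (pdR j φ) x =
      fderiv ℝ (fderiv ℝ φ) x (EuclideanSpace.single i 1) (EuclideanSpace.single j 1) := by
  unfold pdR
  simp [fderiv_clm_apply (differentiable_fderiv hφ x) (differentiableAt_const _)]

lemma pdR_pdR_comm (hφ : ContDiff ℝ 2 φ) (i j : Fin 2) (x : R2) :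
    pdR i (pdR j φ) x = pdR j (pdR i φ) x := by
  rw [pdR_pdR_eq hφ, pdR_pdR_eq hφ]
  exact (hφ.contDiffAt.isSymmSndFDerivAt (by simp)).eq _ _

lemma abs_pdR_pdR_le (hφ : ContDiff ℝ 2 φ) (hM : ∀ x, ‖iteratedFDeriv ℝ 2 φ x‖ ≤ M)
    (i j : Fin 2) (x : R2) : |pdR i (pdR j φ) x| ≤ M := by
  rw [pdR_pdR_eq hφ, ← Real.norm_eq_abs]
  refine (ContinuousLinearMap.le_opNorm₂ _ _ _).trans ?_
  simpa [norm_fderiv_fderiv] using hM x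

lemma abs_pdR_sub_le (hφ : ContDiff ℝ 2 φ) (hM : ∀ x, ‖iteratedFDeriv ℝ 2 φ x‖ ≤ M)
    (j : Fin 2) (x y : R2) : |pdR j φ x - pdR j φ y| ≤ M * ‖x - y‖ := by
  refine ((fderiv ℝ φ x - fderiv ℝ φ y).le_opNorm (EuclideanSpace.single j 1)).trans ?_
  simpa using norm_fderiv_sub_fderiv_le hφ hM x y

lemma abs_lapR_le (hφ : ContDiff ℝ 2 φ) (hM : ∀ x, ‖iteratedFDeriv ℝ 2 φ x‖ ≤ M) (x : R2) :
    |lapR φ x| ≤ 2 * M := by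
  rw [lapR]
  linarith [abs_add_le (pdR 0 (pdR 0 φ) x) (pdR 1 (pdR 1 φ) x), abs_pdR_pdR_le hφ hM 0 0 x,
    abs_pdR_pdR_le hφ hM 1 1 x]

lemma abs_magPot_sub_apply_le (hφ : ContDiff ℝ 2 φ) (hM : ∀ x, ‖iteratedFDeriv ℝ 2 φ x‖ ≤ M)
    (x y : R2) (j : Fin 2) : |(magPot φ x - magPot φ y) j| ≤ M * ‖x - y‖ := by
  fin_cases j
  · simpa [magPot] using abs_pdR_sub_le hφ hM 1 x y
  · simpa [magPot, norm_sub_rev, neg_add_eq_sub] using abs_pdR_sub_le hφ hM 0 y x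

lemma differentiable_magPot (hφ : ContDiff ℝ 2 φ) : Differentiable ℝ (magPot φ) := by
  have hpd (j : Fin 2) : Differentiable ℝ (pdR j φ) :=
    (differentiable_fderiv hφ).clm_apply (differentiable_const _)
  rw [differentiable_piLp]
  intro j
  fin_cases j
  exacts [hpd 1, (hpd 0).neg]

lemma sum_pdR_magPot (hφ : ContDiff ℝ 2 φ) (x : R2) :
    ∑ j, pdR j (fun y => magPot φ y j) x = 0 := by
  have hneg : pdR 1 (fun y => -pdR 0 φ y) x = -pdR 1 (pdR 0 φ) x := by
    rw [pdR, fderiv_fun_neg]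
    rfl
  simp [Fin.sum_univ_two, magPot, hneg, pdR_pdR_comm hφ 0 1]

end MagneticPotential

section Gauge

variable {φ : R2 → ℝ} {l : ℝ}

lemma pdC_eq_lineDerivOp (j : Fin 2) (w : 𝓢(R2, ℂ)) :
    pdC j w = (∂_{EuclideanSpace.basisFun (Fin 2) ℝ j} w : 𝓢(R2, ℂ)) := by
  rw [EuclideanSpace.basisFun_apply]
  rfl

lemma sum_pdC_pdC_eq_laplacian (w : 𝓢(R2, ℂ)) (x : R2) :
    ∑ j, pdC j (pdC j w) x = (Δ w : 𝓢(R2, ℂ)) x := by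
  simp only [SchwartzMap.laplacian_eq_sum (EuclideanSpace.basisFun (Fin 2) ℝ), pdC_eq_lineDerivOp,
    sum_apply]

lemma four_mul_opP_planeWave_mul (hφ : ContDiff ℝ 2 φ) (k : R2) (w : 𝓢(R2, ℂ)) (x : R2) :
    4 * opP φ l (planeWave k * w) x = planeWave k x * (-(Δ w : 𝓢(R2, ℂ)) x +
      2 * I * ∑ j, (magPot φ x - k) j * pdC j w x +
      (∑ j, ((magPot φ x - k) j : ℂ) ^ 2 - lapR φ x - 4 * (l : ℂ) ^ 2) * w x) := by
  have ha : Differentiable ℝ fun y => magPot φ y - k := (differentiable_magPot hφ).sub_const k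
  have hw : Differentiable ℝ w := w.differentiable
  have hpd (j : Fin 2) : Differentiable ℝ (pdC j w) := by
    rw [pdC_eq_lineDerivOp]
    exact SchwartzMap.differentiable _
  have hdiv : ∑ j, (pdR j (fun y => (magPot φ y - k) j) x : ℂ) = 0 := by
    rw [← ofReal_sum, ofReal_eq_zero, ← sum_pdR_magPot hφ x]
    simp only [pdR, PiLp.sub_apply, fderiv_sub_const]
  rw [four_mul_opP_apply, ← sum_pdC_pdC_eq_laplacian]
  simp only [covD_planeWave_mul k hw, covD_planeWave_mul k (differentiable_covD ha hw (hpd _)),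
    Pi.mul_apply, covD_covD_apply ha hw (hpd _)]
  simp only [Fin.sum_univ_two] at hdiv ⊢
  linear_combination planeWave k x * I * w x * hdiv

lemma norm_laplacian_apply_le (hφ : ContDiff ℝ 2 φ) {M Λ B : ℝ}
    (hM : ∀ x, ‖iteratedFDeriv ℝ 2 φ x‖ ≤ M) (hl : |l| ≤ Λ) {k x : R2}
    (hB : ∀ j, |(magPot φ x - k) j| ≤ B) (w : 𝓢(R2, ℂ)) :
    ‖(Δ w : 𝓢(R2, ℂ)) x‖ ≤ ‖4 * opP φ l (planeWave k * w) x‖ +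
      2 * B * ∑ j, ‖pdC j w x‖ + (2 * B ^ 2 + 2 * M + 4 * Λ ^ 2) * ‖w x‖ := by
  have hgrad : ‖∑ j, (magPot φ x - k) j * pdC j w x‖ ≤ B * ∑ j, ‖pdC j w x‖ := by
    rw [Finset.mul_sum]
    refine norm_sum_le_of_le _ fun j _ => ?_
    rw [norm_mul, norm_real, Real.norm_eq_abs]
    gcongr
    exact hB j
  have hpot : ‖∑ j, ((magPot φ x - k) j : ℂ) ^ 2 - lapR φ x - 4 * (l : ℂ) ^ 2‖ ≤
      2 * B ^ 2 + 2 * M + 4 * Λ ^ 2 := by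
    refine norm_sub_le_of_le (norm_sub_le_of_le ?_ ?_) ?_
    · rw [Fin.sum_univ_two, two_mul]
      refine norm_add_le_of_le ?_ ?_ <;>
      · rw [norm_pow, norm_real, Real.norm_eq_abs]
        gcongr
        exact hB _
    · simpa using abs_lapR_le hφ hM x
    · rw [norm_mul, norm_pow, norm_real, norm_ofNat, Real.norm_eq_abs]
      gcongr
  rw [four_mul_opP_planeWave_mul hφ, norm_mul, norm_planeWave, one_mul]
  set X := ∑ j, (magPot φ x - k) j * pdC j w x
  set Y := ∑ j, ((magPot φ x - k) j : ℂ) ^ 2 - lapR φ x - 4 * (l : ℂ) ^ 2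
  set Z := (Δ w : 𝓢(R2, ℂ)) x
  calc ‖Z‖ = ‖2 * I * X + Y * w x - (-Z + 2 * I * X + Y * w x)‖ := by congr 1; ring
    _ ≤ 2 * (B * ∑ j, ‖pdC j w x‖) + (2 * B ^ 2 + 2 * M + 4 * Λ ^ 2) * ‖w x‖
        + ‖-Z + 2 * I * X + Y * w x‖ := by
      refine norm_sub_le_of_le (norm_add_le_of_le ?_ ?_) le_rfl
      · rw [norm_mul, norm_mul, norm_I, mul_one, norm_ofNat]
        gcongr
      · rw [norm_mul]
        gcongr
    _ = _ := by ring

end Gauge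

section LocalEstimate

lemma measurable_opP {φ : R2 → ℝ} {l : ℝ} {u : R2 → ℂ} (hu : Measurable u) :
    Measurable (opP φ l u) := by
  have hpdR (f : R2 → ℝ) (j : Fin 2) : Measurable (pdR j f) := measurable_fderiv_apply_const ℝ f _
  have hDop (f : R2 → ℂ) (j : Fin 2) : Measurable (Dop j f) :=
    (measurable_fderiv_apply_const ℝ f _).const_mul _
  have hA (f : R2 → ℂ) (hf : Measurable f) : Measurable (opA φ f) := by
    unfold opA
    fun_prop
  have hB (f : R2 → ℂ) (hf : Measurable f) : Measurable (opB φ f) := by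
    unfold opB
    fun_prop
  have hAA := hA _ (hA u hu)
  have hBB := hB _ (hB u hu)
  unfold opP lapR
  fun_prop

variable {φ : R2 → ℝ} {M R Λ : ℝ≥0} {l : ℝ} {q : R2}

lemma eLpNorm_laplacian_le_opP (hφ : ContDiff ℝ 2 φ) (hM : ∀ x, ‖iteratedFDeriv ℝ 2 φ x‖ ≤ M)
    (hl : |l| ≤ Λ) (w : 𝓢(R2, ℂ)) (hw : tsupport w ⊆ Metric.closedBall q R) :
    eLpNorm (Δ w : 𝓢(R2, ℂ)) 2 volume ≤
      8 * eLpNorm (opP φ l (planeWave (magPot φ q) * w)) 2 volume +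
        (12 * (M * R) ^ 2 + 4 * M + 8 * Λ ^ 2 : ℝ≥0) * eLpNorm w 2 volume := by
  set g := opP φ l (planeWave (magPot φ q) * w)
  have hgmeas : Measurable g := measurable_opP
    ((contDiff_planeWave (n := 0) _).continuous.mul w.continuous).measurable
  have hpointwise (x : R2) : ‖(Δ w : 𝓢(R2, ℂ)) x‖ ≤ ‖((4 : ℂ) • g) x‖ + 2 * (M * R) *
      ∑ i, ‖(∂_{EuclideanSpace.basisFun (Fin 2) ℝ i} w : 𝓢(R2, ℂ)) x‖ +
      (2 * (M * R) ^ 2 + 2 * M + 4 * Λ ^ 2) * ‖w x‖ := by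
    by_cases hx : x ∈ tsupport w
    · have hpot (j : Fin 2) : |(magPot φ x - magPot φ q) j| ≤ M * R := by
        refine (abs_magPot_sub_apply_le hφ hM x q j).trans ?_
        gcongr
        exact mem_closedBall_iff_norm.1 (hw hx)
      simp only [← pdC_eq_lineDerivOp]
      exact norm_laplacian_apply_le hφ hM hl hpot w
    · rw [image_eq_zero_of_notMem_tsupport fun h => hx (tsupport_laplacian_subset w h), norm_zero]
      positivity
  refine (eLpNorm_laplacian_le_of_norm_le _ w (hgmeas.const_smul _).aestronglyMeasurable
    (by positivity) (by positivity) hpointwise).trans_eq ?_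
  have hconst : ENNReal.ofReal (Fintype.card (Fin 2) * (2 * (M * R)) ^ 2 +
      2 * (2 * (M * R) ^ 2 + 2 * M + 4 * Λ ^ 2)) =
      (12 * (M * R) ^ 2 + 4 * M + 8 * Λ ^ 2 : ℝ≥0) := by
    rw [← ENNReal.ofReal_coe_nnreal]
    congr 1
    push_cast [Fintype.card_fin]
    ring
  rw [hconst, eLpNorm_const_smul, ← mul_assoc, ← ofReal_norm, norm_ofNat, ENNReal.ofReal_ofNat]
  norm_num

theorem exists_eLpNorm_top_le_opP (M R Λ : ℝ≥0) : ∃ C : ℝ≥0, ∀ {φ : R2 → ℝ} {l : ℝ} {q : R2}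
    {v : R2 → ℂ}, ContDiff ℝ 2 φ → (∀ x, ‖iteratedFDeriv ℝ 2 φ x‖ ≤ M) → |l| ≤ Λ →
    ContDiff ℝ ∞ v → tsupport v ⊆ Metric.closedBall q R →
    eLpNorm v ⊤ volume ≤ C * (eLpNorm (opP φ l v) 2 volume + eLpNorm v 2 volume) := by
  obtain ⟨C, hC⟩ := exists_eLpNorm_top_le_eLpNorm_two_laplacian (E := R2) (F := ℂ) (by simp)
  set K : ℝ≥0 := 12 * (M * R) ^ 2 + 4 * M + 8 * Λ ^ 2
  refine ⟨C * (9 + K), fun {φ l q v} hφ hM hl hv hsupp => ?_⟩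
  set k := magPot φ q
  have hcompact : HasCompactSupport v :=
    (isCompact_closedBall q (R : ℝ)).of_isClosed_subset (isClosed_tsupport v) hsupp
  let w : 𝓢(R2, ℂ) :=
    hcompact.mul_left.toSchwartzMap ((contDiff_planeWave (-k) (n := ⊤)).mul hv)
  have hvw : planeWave k * ⇑w = v := by
    change planeWave k * (planeWave (-k) * v) = v
    rw [← mul_assoc, planeWave_mul_planeWave_neg, one_mul]
  have hnorm (p : ℝ≥0∞) : eLpNorm w p volume = eLpNorm v p volume :=
    eLpNorm_congr_norm_ae (.of_forall fun x => by rw [← hvw]; simp [norm_planeWave])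
  have hlap := eLpNorm_laplacian_le_opP hφ hM hl w (tsupport_mul_subset_right.trans hsupp)
  rw [hvw, hnorm] at hlap
  rw [← hnorm ⊤]
  calc eLpNorm w ⊤ volume
      ≤ C * (eLpNorm v 2 volume + eLpNorm (Δ w : 𝓢(R2, ℂ)) 2 volume) := hnorm 2 ▸ hC w
    _ ≤ C * (eLpNorm v 2 volume + (8 * eLpNorm (opP φ l v) 2 volume + K * eLpNorm v 2 volume)) := by
      gcongr
    _ = C * (8 * eLpNorm (opP φ l v) 2 volume + (1 + K) * eLpNorm v 2 volume) := by ring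
    _ ≤ C * ((9 + K) * eLpNorm (opP φ l v) 2 volume + (9 + K) * eLpNorm v 2 volume) := by
      gcongr
      · exact le_add_right (by norm_num)
      · norm_num
    _ = _ := by push_cast; ring

end LocalEstimate

theorem stmt15_general (M R Λ : ℝ≥0) : ∃ C : ℝ, 0 < C ∧ ∀ φ : R2 → ℝ, ContDiff ℝ 2 φ →
    (∀ x, ‖iteratedFDeriv ℝ 2 φ x‖ ≤ M) → ∀ β : R2 → ℝ, ContDiff ℝ ∞ β → (∀ x, |β x| ≤ 1) →
    (∀ x, R ≤ ‖x‖ → β x = 0) → ∀ l : ℝ, |l| ≤ Λ → ∀ q : R2, ∀ u : R2 → ℂ, ContDiff ℝ ∞ u →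
      eLpNorm (fun x => ((β (x - q) : ℝ) : ℂ) * u x) ⊤ volume ≤
        ENNReal.ofReal C *
          (eLpNorm (opP φ l (fun x => ((β (x - q) : ℝ) : ℂ) * u x)) 2 volume +
            eLpNorm u 2 volume) := by
  obtain ⟨C, hC⟩ := exists_eLpNorm_top_le_opP M R Λ
  refine ⟨C + 1, by positivity, fun φ hφ hM β hβ hβ_le hβ_zero l hl q u hu => ?_⟩
  set v : R2 → ℂ := fun x => ((β (x - q) : ℝ) : ℂ) * u x
  have hv : ContDiff ℝ ∞ v :=
    (ofRealCLM.contDiff.comp (hβ.comp (contDiff_id.sub contDiff_const))).mul hu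
  have hsupp : tsupport v ⊆ Metric.closedBall q R := by
    refine closure_minimal (fun x hx => ?_) Metric.isClosed_closedBall
    by_contra hxR
    rw [mem_closedBall_iff_norm, not_le] at hxR
    exact hx (by simp [v, hβ_zero _ hxR.le])
  have hvu : eLpNorm v 2 volume ≤ eLpNorm u 2 volume := by
    refine eLpNorm_mono fun x => ?_
    rw [norm_mul, norm_real]
    exact mul_le_of_le_one_left (norm_nonneg _) (hβ_le _)
  have hC' : (C : ℝ≥0∞) ≤ ENNReal.ofReal (C + 1) := by
    rw [← ENNReal.ofReal_coe_nnreal]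
    exact ENNReal.ofReal_le_ofReal (by simp)
  exact (hC hφ hM hl hv hsupp).trans (by gcongr)

/-- For `λ ∈ [0,Λ]` and solutions of `P u = 0`,
`‖β_q u‖_{L^∞} ≤ C (‖P(β_q u)‖_{L²} + ‖u‖_{L²})`, uniformly in `q`. -/
theorem stmt15 (φ : R2 → ℝ) (hφ_smooth : ContDiff ℝ (⊤ : ℕ∞) φ)
    (hφ_bd : ∀ n : ℕ, 2 ≤ n → ∃ C : ℝ, ∀ x : R2, ‖iteratedFDeriv ℝ n φ x‖ ≤ C)
    (β : R2 → ℝ) (hβ_smooth : ContDiff ℝ (⊤ : ℕ∞) β) (hβ_supp : HasCompactSupport β)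
    (hβ_range : ∀ x : R2, 0 ≤ β x ∧ β x ≤ 1)
    (hβ_one : ∀ x : R2, ‖x‖ ≤ 1 → β x = 1) (hβ_zero : ∀ x : R2, 2 ≤ ‖x‖ → β x = 0) :
    ∀ Λ : ℝ, 0 < Λ → ∃ C > 0, ∀ l ∈ Set.Icc (0 : ℝ) Λ, ∀ q : R2, ∀ u : SchwartzMap R2 ℂ,
      (∀ x : R2, opP φ l (⇑u) x = 0) →
      eLpNorm (fun x => ((β (x - q) : ℝ) : ℂ) * u x) ⊤ volume ≤
        ENNReal.ofReal C *
          (eLpNorm (opP φ l (fun x => ((β (x - q) : ℝ) : ℂ) * u x)) 2 volume +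
            eLpNorm (⇑u) 2 volume) := by
  intro Λ hΛ
  obtain ⟨M, hM⟩ := hφ_bd 2 le_rfl
  have hM₀ : 0 ≤ M := (norm_nonneg _).trans (hM 0)
  obtain ⟨C, hC, hbound⟩ := stmt15_general ⟨M, hM₀⟩ 2 ⟨Λ, hΛ.le⟩
  refine ⟨C, hC, fun l hl q u _ => ?_⟩
  exact hbound φ (hφ_smooth.of_le (by norm_cast)) hM β hβ_smooth
    (fun x => abs_le.2 ⟨by linarith [(hβ_range x).1], (hβ_range x).2⟩) hβ_zero l
    (abs_le.2 ⟨by linarith [hl.1], hl.2⟩) q u u.smooth'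
end
end
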